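/- arXiv:2510.07939 — 6 statements merged into one kernel-verified Lean document; each statement's English description precedes it below -/
import Mathlib

section
/- For every integer i with 1 ≤ i < q such that p does not divide i, there is a 𝕜G-module isomorphism V_2 ⊗ V_i ≅ V_{i+1} ⊕ V_{i-1} (where V_0 denotes the zero module). -/
/-!
Dually, `V_m^*` is the space `P_m` of polynomials of degree `< m` with `E` acting by
translation, and `P_m` is the space of binary forms of degree `m - 1` dehomogenized. There is
an exact sequence `0 → P_{i-1} → P_2 ⊗ P_i → P_{i+1} → 0` whose first map is
`f ↦ X ⊗ f - 1 ⊗ X f` and whose second map is multiplication. Polarization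
`f ↦ X ⊗ f' + 1 ⊗ (i f - X f')`, `P_{i+1} → P_2 ⊗ P_i`, is equivariant, and followed by
multiplication it is `i` times the identity; since `p ∤ i` it splits the sequence.

The isomorphism below (`pairing`, extended to the tensor product) is the dual of
`P_{i+1} ⊕ P_{i-1} → P_2 ⊗ P_i`. Its equivariance (`pairing_equivariant`) reduces to
Pascal's rule and the derivative of `(X + β)^k`, written as identities for the binomial
transform `binomT`. It is injective because `i ≠ 0` in `𝕜` (`lift_pairing_injective`), and
both sides have dimension `2 i`.
-/

/-!
Setting (common to the paper "Tensor products and symmetric powers of modular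
representations of elementary abelian p-groups"):

`p` is a prime, `𝕜` a field of characteristic `p`, `q = p^n`, and `G` an elementary
abelian `p`-group of order `q`, identified with an additive subgroup `E ⊆ 𝕜` of order
`q` via a faithful indecomposable 2-dimensional module `W`, on which `α ∈ E` acts by
`[[1, α], [0, 1]]`.  For `1 ≤ m ≤ q`, `V_m = S^{m-1}(W)^*` is modelled concretely as
`𝕜^m` with basis `x_0, …, x_{m-1}`, on which `α ∈ E` acts by
`α · x_i = ∑_{j=0}^{m-1-i} C(i+j, i) (−α)^j x_{i+j}`.
-/

open scoped BigOperators TensorProduct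
open CategoryTheory CategoryTheory.Limits MonoidalCategory MvPolynomial

namespace ElemAbelianPaper

variable (𝕜 : Type) [Field 𝕜]

/-- The matrix of the action of `α` on `V_m` in the basis `x_0, …, x_{m-1}`:
entry `(k, i)` is `C(k,i) (−α)^{k−i}`, encoding `α · x_i = ∑_j C(i+j,i) (−α)^j x_{i+j}`. -/
noncomputable def Bmat (m : ℕ) (α : 𝕜) : Matrix (Fin m) (Fin m) 𝕜 :=
  Matrix.of fun k i => ((k : ℕ).choose (i : ℕ) : 𝕜) * (-α) ^ ((k : ℕ) - (i : ℕ))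

/-- The action of `α ∈ 𝕜` on `V_m = 𝕜^m`. -/
noncomputable def Vact (m : ℕ) (α : 𝕜) : (Fin m → 𝕜) →ₗ[𝕜] (Fin m → 𝕜) :=
  (Bmat 𝕜 m α).mulVecLin

/-! ### The binomial transform and the action on `V_m` -/

/-- The lower triangular transform `v ↦ (∑_{j ≤ k} C(k,j) β^{k-j} v_j)_k` on all sequences.
Reading `v` as the functional `X^j ↦ v_j` on polynomials, its `k`-th entry is the value of
that functional at `(X + β)^k`. -/
noncomputable def binomT (β : 𝕜) (v : ℕ → 𝕜) (k : ℕ) : 𝕜 :=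
  ∑ j ∈ Finset.range (k + 1), ((k.choose j : ℕ) : 𝕜) * β ^ (k - j) * v j

/-- Extension of a vector by zero to a sequence indexed by `ℕ`. -/
noncomputable def extendZ {m : ℕ} (v : Fin m → 𝕜) (k : ℕ) : 𝕜 :=
  if h : k < m then v ⟨k, h⟩ else 0

lemma extendZ_fin {m : ℕ} (v : Fin m → 𝕜) (k : Fin m) : extendZ 𝕜 v k = v k := by
  simp [extendZ]

lemma extendZ_of_lt {m : ℕ} (v : Fin m → 𝕜) (k : ℕ) (h : k < m) :
    extendZ 𝕜 v k = v ⟨k, h⟩ := by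
  simp [extendZ, h]

lemma extendZ_add {m : ℕ} (v w : Fin m → 𝕜) (k : ℕ) :
    extendZ 𝕜 (v + w) k = extendZ 𝕜 v k + extendZ 𝕜 w k := by
  unfold extendZ; split_ifs <;> simp

lemma extendZ_smul {m : ℕ} (c : 𝕜) (v : Fin m → 𝕜) (k : ℕ) :
    extendZ 𝕜 (c • v) k = c * extendZ 𝕜 v k := by
  unfold extendZ; split_ifs <;> simp

/-- The action on `V_m` is the truncation of `binomT (-α)`: by triangularity, the first `m`
entries of the transform only involve the first `m` entries of the sequence. -/
lemma Vact_apply {m : ℕ} (α : 𝕜) (v : Fin m → 𝕜) (k : Fin m) :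
    Vact 𝕜 m α v k = binomT 𝕜 (-α) (extendZ 𝕜 v) k := by
  have h1 : Vact 𝕜 m α v k = ∑ j ∈ Finset.range m,
      (((k : ℕ).choose j : ℕ) : 𝕜) * (-α) ^ ((k : ℕ) - j) * extendZ 𝕜 v j := by
    rw [Finset.sum_range]
    simp [Vact, Bmat, Matrix.mulVec, dotProduct, extendZ_fin]
  rw [h1, binomT]
  symm
  apply Finset.sum_subset
  · intro j hj
    have := k.2
    simp only [Finset.mem_range] at *
    omega
  · intro j _ hj
    simp only [Finset.mem_range, not_lt] at hj
    rw [Nat.choose_eq_zero_of_lt (by omega)]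
    simp

lemma binomT_congr (β : 𝕜) {v w : ℕ → 𝕜} (k : ℕ) (h : ∀ j ≤ k, v j = w j) :
    binomT 𝕜 β v k = binomT 𝕜 β w k := by
  apply Finset.sum_congr rfl
  intro j hj
  rw [h j (by simp only [Finset.mem_range] at hj; omega)]

lemma binomT_lin (β a b : 𝕜) (v w : ℕ → 𝕜) (k : ℕ) :
    binomT 𝕜 β (fun j => a * v j + b * w j) k
      = a * binomT 𝕜 β v k + b * binomT 𝕜 β w k := by
  simp only [binomT, Finset.mul_sum, ← Finset.sum_add_distrib]
  exact Finset.sum_congr rfl fun j _ => by ring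

/-! ### Binomial identities -/

/-- The derivative of `(X + β)^k` is `k (X + β)^(k-1)`. -/
lemma binomT_deriv (β : 𝕜) (v : ℕ → 𝕜) (k : ℕ) :
    binomT 𝕜 β (fun j => (j : 𝕜) * v (j - 1)) k = k * binomT 𝕜 β v (k - 1) := by
  cases k with
  | zero => simp [binomT]
  | succ k =>
    rw [binomT, Finset.sum_range_succ']
    simp only [Nat.cast_zero, zero_mul, mul_zero, add_zero, Nat.add_sub_cancel, binomT,
      Finset.mul_sum]
    refine Finset.sum_congr rfl fun j _ => ?_
    have h : (((k + 1).choose (j + 1) : ℕ) : 𝕜) * ((j + 1 : ℕ) : 𝕜)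
        = ((k + 1 : ℕ) : 𝕜) * ((k.choose j : ℕ) : 𝕜) := by
      exact_mod_cast (congrArg (Nat.cast (R := 𝕜)) (Nat.add_one_mul_choose_eq k j)).symm
    rw [Nat.add_sub_add_right]
    linear_combination (β ^ (k - j) * v j) * h

/-- The identity `(X + β)^(k+1) = X (X + β)^k + β (X + β)^k`. -/
lemma binomT_succ (β : 𝕜) (v : ℕ → 𝕜) (k : ℕ) :
    binomT 𝕜 β v (k + 1) = binomT 𝕜 β (fun j => v (j + 1)) k + β * binomT 𝕜 β v k := by
  have h2 : β * binomT 𝕜 β v k = ∑ j ∈ Finset.range (k + 1 + 1),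
      ((k.choose j : ℕ) : 𝕜) * β ^ (k + 1 - j) * v j := by
    rw [Finset.sum_range_succ, Nat.choose_succ_self, binomT, Finset.mul_sum]
    simp only [Nat.cast_zero, zero_mul, add_zero]
    refine Finset.sum_congr rfl fun j hj => ?_
    simp only [Finset.mem_range] at hj
    rw [Nat.sub_add_comm (by omega), pow_succ]
    ring
  rw [h2, binomT, Finset.sum_range_succ', Finset.sum_range_succ' _ (k + 1), binomT,
    ← add_assoc, ← Finset.sum_add_distrib]
  congr 1
  · refine Finset.sum_congr rfl fun j _ => ?_
    rw [Nat.choose_succ_succ, Nat.add_sub_add_right]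
    push_cast
    ring
  · simp

/-- The identity `X · d/dX (X + β)^k = k (X + β)^k - k β (X + β)^(k-1)`. -/
lemma binomT_euler (β : 𝕜) (v : ℕ → 𝕜) (k : ℕ) :
    binomT 𝕜 β (fun j => (j : 𝕜) * v j) k
      = k * binomT 𝕜 β v k - k * β * binomT 𝕜 β v (k - 1) := by
  have h : binomT 𝕜 β (fun j => (j : 𝕜) * v j) k
      = binomT 𝕜 β (fun j => (j : 𝕜) * (fun l => v (l + 1)) (j - 1)) k := by
    refine binomT_congr 𝕜 β k fun j _ => ?_
    cases j <;> simp
  rw [h, binomT_deriv 𝕜 β (fun l => v (l + 1))]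
  cases k with
  | zero => simp
  | succ k =>
    rw [binomT_succ 𝕜 β v k]
    simp only [Nat.add_sub_cancel]
    ring

/-! ### The equivariant pairing -/

/-- The bilinear map `V_2 × V_i → V_{i+1} ⊕ V_{i-1}`,
`(u, v) ↦ (k u_1 v_{k-1} + (i-k) u_0 v_k)_k, (u_1 v_k - u_0 v_{k+1})_k`.
The first component is dual to the polarization of binary forms of degree `i`, the second to
`f ↦ X ⊗ f - 1 ⊗ X f`. The out-of-range entry `v_i` is multiplied by `0`, and so is the
truncated index `k - 1` at `k = 0`. -/
noncomputable def pairing (i : ℕ) : (Fin 2 → 𝕜) →ₗ[𝕜] (Fin i → 𝕜) →ₗ[𝕜]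
    ((Fin (i + 1) → 𝕜) × (Fin (i - 1) → 𝕜)) :=
  LinearMap.mk₂ 𝕜
    (fun u v =>
      (fun k => ((k : ℕ) : 𝕜) * (u 1 * extendZ 𝕜 v ((k : ℕ) - 1))
          + ((i : 𝕜) - ((k : ℕ) : 𝕜)) * (u 0 * extendZ 𝕜 v k),
       fun k => u 1 * extendZ 𝕜 v k - u 0 * extendZ 𝕜 v ((k : ℕ) + 1)))
    (by intros; ext <;> simp <;> ring)
    (by intros; ext <;> simp <;> ring)
    (by intros; ext <;> simp [extendZ_add] <;> ring)
    (by intros; ext <;> simp [extendZ_smul] <;> ring)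

lemma pairing_fst (i : ℕ) (u : Fin 2 → 𝕜) (v : Fin i → 𝕜) (k : Fin (i + 1)) :
    (pairing 𝕜 i u v).1 k = ((k : ℕ) : 𝕜) * (u 1 * extendZ 𝕜 v ((k : ℕ) - 1))
          + ((i : 𝕜) - ((k : ℕ) : 𝕜)) * (u 0 * extendZ 𝕜 v k) := rfl

lemma pairing_snd (i : ℕ) (u : Fin 2 → 𝕜) (v : Fin i → 𝕜) (k : Fin (i - 1)) :
    (pairing 𝕜 i u v).2 k
      = u 1 * extendZ 𝕜 v k - u 0 * extendZ 𝕜 v ((k : ℕ) + 1) := rfl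

lemma Vact_two_zero (α : 𝕜) (u : Fin 2 → 𝕜) : Vact 𝕜 2 α u 0 = u 0 := by
  simp [Vact, Bmat, Matrix.mulVec, dotProduct, Fin.sum_univ_two]

lemma Vact_two_one (α : 𝕜) (u : Fin 2 → 𝕜) : Vact 𝕜 2 α u 1 = u 1 + (-α) * u 0 := by
  simp [Vact, Bmat, Matrix.mulVec, dotProduct, Fin.sum_univ_two]
  ring

lemma extendZ_Vact {m : ℕ} (α : 𝕜) (v : Fin m → 𝕜) (k : ℕ) (h : k < m) :
    extendZ 𝕜 (Vact 𝕜 m α v) k = binomT 𝕜 (-α) (extendZ 𝕜 v) k := by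
  rw [extendZ_of_lt 𝕜 _ k h, Vact_apply]

lemma pairing_equivariant (i : ℕ) (hi : 1 ≤ i) (α : 𝕜) (u : Fin 2 → 𝕜) (v : Fin i → 𝕜) :
    pairing 𝕜 i (Vact 𝕜 2 α u) (Vact 𝕜 i α v)
      = LinearMap.prodMap (Vact 𝕜 (i + 1) α) (Vact 𝕜 (i - 1) α) (pairing 𝕜 i u v) := by
  refine Prod.ext (funext fun k => ?_) (funext fun k => ?_)
  · rw [LinearMap.prodMap_apply]
    dsimp only
    rw [Vact_apply 𝕜 α (pairing 𝕜 i u v).1, pairing_fst, Vact_two_zero, Vact_two_one]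
    have hk := k.2
    have e1 : binomT 𝕜 (-α) (extendZ 𝕜 (pairing 𝕜 i u v).1) k
        = binomT 𝕜 (-α) (fun j => 1 * (u 1 * ((j : 𝕜) * extendZ 𝕜 v (j - 1))
            + (i * u 0) * extendZ 𝕜 v j)
            + (-u 0) * ((j : 𝕜) * extendZ 𝕜 v j)) k := by
      refine binomT_congr 𝕜 _ k fun j hj => ?_
      rw [extendZ_of_lt 𝕜 _ j (by omega), pairing_fst]
      ring
    rw [e1,
      binomT_lin 𝕜 _ _ _ (fun j => u 1 * ((j : 𝕜) * extendZ 𝕜 v (j - 1))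
        + (i * u 0) * extendZ 𝕜 v j) (fun j => (j : 𝕜) * extendZ 𝕜 v j),
      binomT_lin 𝕜 _ _ _ (fun j => (j : 𝕜) * extendZ 𝕜 v (j - 1)), binomT_deriv, binomT_euler,
      extendZ_Vact 𝕜 α v ((k : ℕ) - 1) (by omega)]
    -- At `k = i` the entry `extendZ (Vact v) i` is zero, unlike `binomT _ _ i`, but its
    -- coefficient `i - k` vanishes.
    rcases Nat.lt_succ_iff_lt_or_eq.mp hk with h | h
    · rw [extendZ_Vact 𝕜 α v k h]
      ring
    · rw [h]
      ring
  · rw [LinearMap.prodMap_apply]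
    dsimp only
    rw [Vact_apply 𝕜 α (pairing 𝕜 i u v).2, pairing_snd, Vact_two_zero, Vact_two_one]
    have hk := k.2
    have e1 : binomT 𝕜 (-α) (extendZ 𝕜 (pairing 𝕜 i u v).2) k
        = binomT 𝕜 (-α) (fun j => u 1 * extendZ 𝕜 v j
            + (-u 0) * (fun j => extendZ 𝕜 v (j + 1)) j) k := by
      refine binomT_congr 𝕜 _ k fun j hj => ?_
      rw [extendZ_of_lt 𝕜 _ j (by omega), pairing_snd]
      ring
    rw [e1, binomT_lin, extendZ_Vact 𝕜 α v k (by omega),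
      extendZ_Vact 𝕜 α v (k + 1) (by omega), binomT_succ]
    ring

/-! ### Injectivity and the isomorphism -/

lemma exists_two_tensor {M : Type*} [AddCommGroup M] [Module 𝕜 M]
    (w : TensorProduct 𝕜 (Fin 2 → 𝕜) M) :
    ∃ a b : M, w = (Pi.single 0 1 : Fin 2 → 𝕜) ⊗ₜ[𝕜] a
      + (Pi.single 1 1 : Fin 2 → 𝕜) ⊗ₜ[𝕜] b := by
  induction w with
  | zero => exact ⟨0, 0, by simp⟩
  | tmul u v =>
    refine ⟨u 0 • v, u 1 • v, ?_⟩
    rw [← TensorProduct.smul_tmul, ← TensorProduct.smul_tmul, ← TensorProduct.add_tmul]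
    congr 1
    ext j
    fin_cases j <;> simp
  | add x y hx hy =>
    obtain ⟨a, b, rfl⟩ := hx
    obtain ⟨c, d, rfl⟩ := hy
    refine ⟨a + c, b + d, ?_⟩
    rw [TensorProduct.tmul_add, TensorProduct.tmul_add]
    abel

/-- Dual to the fact that polarization followed by multiplication is `i` times the identity:
a tensor `e_0 ⊗ a + e_1 ⊗ b` in the kernel has `b_k = a_{k+1}`, hence `i a_k = 0` and
`i b_{i-1} = 0`. -/
lemma lift_pairing_injective (i : ℕ) (h0 : (i : 𝕜) ≠ 0) :
    Function.Injective (TensorProduct.lift (pairing 𝕜 i)) := by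
  rw [injective_iff_map_eq_zero]
  intro w hw
  obtain ⟨a, b, rfl⟩ := exists_two_tensor 𝕜 w
  have h1 : ∀ k, k < i + 1 → (k : 𝕜) * extendZ 𝕜 b (k - 1)
      + ((i : 𝕜) - k) * extendZ 𝕜 a k = 0 := by
    intro k hk
    have := congrFun (congrArg Prod.fst hw) ⟨k, hk⟩
    simp [pairing_fst] at this
    linear_combination this
  have h2 : ∀ k, k < i - 1 → extendZ 𝕜 b k = extendZ 𝕜 a (k + 1) := by
    intro k hk
    have := congrFun (congrArg Prod.snd hw) ⟨k, hk⟩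
    simp [pairing_snd] at this
    linear_combination this
  have ha : ∀ k, k < i → extendZ 𝕜 a k = 0 := by
    intro k hk
    have h3 := h1 k (by omega)
    apply (mul_eq_zero.mp _).resolve_left h0
    cases k with
    | zero => simpa using h3
    | succ k =>
      rw [Nat.add_sub_cancel, h2 k (by omega)] at h3
      linear_combination h3
  have hb : ∀ k, k < i → extendZ 𝕜 b k = 0 := by
    intro k hk
    by_cases h : k < i - 1
    · rw [h2 k h, ha _ (by omega)]
    · have h3 := h1 i (by omega)
      rw [sub_self, zero_mul, add_zero] at h3
      rw [show k = i - 1 by omega]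
      exact (mul_eq_zero.mp h3).resolve_left h0
  have ea : a = 0 := funext fun k => by rw [← extendZ_fin 𝕜 a k, ha k k.2]; rfl
  have eb : b = 0 := funext fun k => by rw [← extendZ_fin 𝕜 b k, hb k k.2]; rfl
  simp [ea, eb]

/-- **Theorem 1(a).** Let `p` be a prime, `𝕜` a field of characteristic `p`, `E ⊆ 𝕜` the
additive subgroup of order `q = p^n` through which the elementary abelian group `G` acts.
For every `1 ≤ i < q` with `p ∤ i`, there is a `𝕜G`-module isomorphism
`V_2 ⊗ V_i ≅ V_{i+1} ⊕ V_{i-1}` (with `V_0` the zero module). -/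
theorem V2_tensor_Vi (p n : ℕ) (hp : p.Prime) [CharP 𝕜 p]
    (E : AddSubgroup 𝕜) (hE : Nat.card E = p ^ n)
    (i : ℕ) (hi1 : 1 ≤ i) (hiq : i < p ^ n) (hpi : ¬ p ∣ i) :
    ∃ e : (TensorProduct 𝕜 (Fin 2 → 𝕜) (Fin i → 𝕜)) ≃ₗ[𝕜]
        ((Fin (i + 1) → 𝕜) × (Fin (i - 1) → 𝕜)),
      ∀ α ∈ E, ∀ v,
        e (TensorProduct.map (Vact 𝕜 2 α) (Vact 𝕜 i α) v)
          = LinearMap.prodMap (Vact 𝕜 (i + 1) α) (Vact 𝕜 (i - 1) α) (e v) := by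
  have h0 : (i : 𝕜) ≠ 0 := fun h => hpi ((CharP.cast_eq_zero_iff 𝕜 p i).mp h)
  have hinj := lift_pairing_injective 𝕜 i h0
  have hdim : Module.finrank 𝕜 (TensorProduct 𝕜 (Fin 2 → 𝕜) (Fin i → 𝕜))
      = Module.finrank 𝕜 ((Fin (i + 1) → 𝕜) × (Fin (i - 1) → 𝕜)) := by
    simp only [Module.finrank_tensorProduct, Module.finrank_prod, Module.finrank_fin_fun]
    omega
  have hsurj := (LinearMap.injective_iff_surjective_of_finrank_eq_finrank hdim).mp hinj
  have hbij : Function.Bijective (TensorProduct.lift (pairing 𝕜 i)) := ⟨hinj, hsurj⟩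
  refine ⟨LinearEquiv.ofBijective _ hbij, fun α _ v => ?_⟩
  rw [LinearEquiv.ofBijective_apply, LinearEquiv.ofBijective_apply]
  induction v with
  | zero => simp only [map_zero]
  | tmul u v =>
    rw [TensorProduct.map_tmul, TensorProduct.lift.tmul, TensorProduct.lift.tmul,
      pairing_equivariant 𝕜 i hi1]
  | add x y hx hy => simp only [map_add, hx, hy]

end ElemAbelianPaper
end

section
/- If n > 1, then the 𝕜G-module V_2 ⊗ V_p is indecomposable. -/
/-!
Setting (common to the paper "Tensor products and symmetric powers of modular
representations of elementary abelian p-groups"):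

`p` is a prime, `𝕜` a field of characteristic `p`, `q = p^n`, and `G` an elementary
abelian `p`-group of order `q`, identified with an additive subgroup `E ⊆ 𝕜` of order
`q` via a faithful indecomposable 2-dimensional module `W`, on which `α ∈ E` acts by
`[[1, α], [0, 1]]`.  For `1 ≤ m ≤ q`, `V_m = S^{m-1}(W)^*` is modelled concretely as
`𝕜^m` with basis `x_0, …, x_{m-1}`, on which `α ∈ E` acts by
`α · x_i = ∑_{j=0}^{m-1-i} C(i+j, i) (−α)^j x_{i+j}`.
-/

/-!
The matrix of `α` on `V_2 ⊗ V_p` is a polynomial of degree at most `p` in `α`. As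
`|E| = p ^ n > p`, a `G`-invariant subspace is invariant under every coefficient of this
polynomial (`coeff_mem`). So it suffices to work with the coefficient operators `C_k`.

Identify `V_2 ⊗ V_p` with `V_p × V_p` through `(f, g) ↦ x_0 ⊗ f + x_1 ⊗ g`, and put
`w = x_1 ⊗ x_{p-1}` and `z = x_0 ⊗ x_{p-1} + x_1 ⊗ x_{p-2}`. Three facts carry the proof:
* `C_p` has rank one: `C_p (f, g)` is a nonzero multiple of `f_0 w`;
* `C_{p-1} (f, g)` is a nonzero multiple of `f_0 z` modulo `w`;
* `C_1` is nilpotent, with kernel inside the span of `z` and `w`.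

If `V_2 ⊗ V_p = U ⊕ U'`, one of the summands, say `U`, contains some `(f, g)` with `f_0 ≠ 0`.
Then `w, z ∈ U`, so `U' ∩ ker C_1 = 0`. Since `C_1` acts nilpotently on `U'`, this forces
`U' = 0`.
-/

open scoped BigOperators TensorProduct
open CategoryTheory CategoryTheory.Limits MonoidalCategory MvPolynomial

namespace ElemAbelianPaper

variable (𝕜 : Type) [Field 𝕜]

/-! ### The action as a polynomial in `α` -/

/-- The coefficient of `α ^ k` in the action of `α` on `V_m`; it sends `x_i` to
`(-1) ^ k C(i+k, k) x_{i+k}`. The truncated index `r - k` is harmless, since `C(r, k) = 0`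
for `r < k`. -/
def coeffV (m k : ℕ) : (Fin m → 𝕜) →ₗ[𝕜] (Fin m → 𝕜) where
  toFun f r := (-1) ^ k * ((r : ℕ).choose k : 𝕜) * f ⟨r - k, by omega⟩
  map_add' f g := by ext r; simp [mul_add]
  map_smul' c f := by ext r; simp; ring

variable {𝕜}

lemma coeffV_apply (m k : ℕ) (f : Fin m → 𝕜) (r : Fin m) :
    coeffV 𝕜 m k f r = (-1) ^ k * ((r : ℕ).choose k : 𝕜) * f ⟨r - k, by omega⟩ := rfl

lemma coeffV_self (m : ℕ) (f : Fin m → 𝕜) : coeffV 𝕜 m m f = 0 := by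
  ext r
  simp [coeffV_apply, Nat.choose_eq_zero_of_lt r.2]

lemma Vact_eq_sum (m : ℕ) (α : 𝕜) (f : Fin m → 𝕜) :
    Vact 𝕜 m α f = ∑ k ∈ Finset.range m, α ^ k • coeffV 𝕜 m k f := by
  ext r
  -- Extend `f` by zero to `ℕ`, so that both sides become sums over `range (r + 1)`.
  let F : ℕ → 𝕜 := fun i => if h : i < m then f ⟨i, h⟩ else 0
  have hF : ∀ (i : ℕ) (h : i < m), f ⟨i, h⟩ = F i := fun i h => by simp [F, h]
  have hsub : Finset.range (r + 1) ⊆ Finset.range m := by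
    intro x hx
    simp only [Finset.mem_range] at *
    omega
  have hL : Vact 𝕜 m α f r =
      ∑ i ∈ Finset.range (r + 1), ((r : ℕ).choose i : 𝕜) * (-α) ^ ((r : ℕ) - i) * F i := by
    rw [Finset.sum_subset hsub, ← Fin.sum_univ_eq_sum_range
      (fun i => ((r : ℕ).choose i : 𝕜) * (-α) ^ ((r : ℕ) - i) * F i)]
    · simp [Vact, Bmat, Matrix.mulVec, dotProduct, F]
    · intro x _ hx
      simp only [Finset.mem_range, not_lt] at hx
      simp [Nat.choose_eq_zero_of_lt (show (r : ℕ) < x by omega)]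
  have hR : (∑ k ∈ Finset.range m, α ^ k • coeffV 𝕜 m k f) r =
      ∑ k ∈ Finset.range (r + 1), ((r : ℕ).choose k : 𝕜) * (-α) ^ k * F (r - k) := by
    rw [Finset.sum_subset hsub]
    · simp only [Finset.sum_apply, Pi.smul_apply, smul_eq_mul, coeffV_apply, hF]
      refine Finset.sum_congr rfl fun k _ => ?_
      rw [neg_pow α]
      ring
    · intro x _ hx
      simp only [Finset.mem_range, not_lt] at hx
      simp [Nat.choose_eq_zero_of_lt (show (r : ℕ) < x by omega)]
  rw [hL, hR, ← Finset.sum_range_reflect]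
  refine Finset.sum_congr rfl fun k hk => ?_
  have hk' : k ≤ r := by simpa [Nat.lt_succ_iff] using hk
  have h1 : (r : ℕ) + 1 - 1 - k = r - k := by omega
  rw [h1, Nat.choose_symm hk', Nat.sub_sub_self hk']

/-- If a polynomial in `α` with vector coefficients takes values in a subspace at more points
than its degree, then its coefficients lie in that subspace. -/
lemma coeff_mem {M : Type*} [AddCommGroup M] [Module 𝕜 M] (U : Submodule 𝕜 M) (d : ℕ)
    (c : ℕ → M) (E : Set 𝕜) (hE : d < Nat.card E)
    (h : ∀ α ∈ E, ∑ k ∈ Finset.range (d + 1), α ^ k • c k ∈ U) (k : ℕ) (hk : k ≤ d) :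
    c k ∈ U := by
  rw [← Submodule.Quotient.mk_eq_zero, ← Module.forall_dual_apply_eq_zero_iff 𝕜]
  intro φ
  let P : Polynomial 𝕜 := ∑ k ∈ Finset.range (d + 1),
    Polynomial.monomial k (φ (Submodule.Quotient.mk (c k)))
  have hfin : Finite E := Nat.finite_of_card_ne_zero (by omega)
  have := Fintype.ofFinite E
  have hP : P = 0 := by
    refine Polynomial.eq_zero_of_natDegree_lt_card_of_eval_eq_zero P
      (Subtype.val_injective (p := (· ∈ E))) ?_ ?_
    · rintro ⟨α, hα⟩
      have h0 := (Submodule.Quotient.mk_eq_zero U).2 (h α hα)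
      have h1 := congrArg φ h0
      rw [← Submodule.mkQ_apply] at h1
      simp only [map_sum, map_smul, map_zero, Submodule.mkQ_apply, smul_eq_mul] at h1
      rw [← h1]
      simp only [P, Polynomial.eval_finsetSum, Polynomial.eval_monomial]
      exact Finset.sum_congr rfl fun _ _ => mul_comm _ _
    · rw [← Nat.card_eq_fintype_card]
      refine lt_of_le_of_lt (Polynomial.natDegree_sum_le_of_forall_le _ _ fun i hi => ?_) hE
      have : i ≤ d := by simpa [Nat.lt_succ_iff] using hi
      exact (Polynomial.natDegree_monomial_le _).trans this
  have h2 : P.coeff k = 0 := by rw [hP]; simp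
  simpa [P, Polynomial.finsetSum_coeff, Polynomial.coeff_monomial, Nat.lt_succ_iff, hk] using h2

/-- The action of `α` on `V_2 ⊗ V_m`, transported to `V_m × V_m` along
`(f, g) ↦ x_0 ⊗ f + x_1 ⊗ g`. -/
noncomputable def pairAct (m : ℕ) (α : 𝕜) (v : (Fin m → 𝕜) × (Fin m → 𝕜)) :
    (Fin m → 𝕜) × (Fin m → 𝕜) :=
  (Vact 𝕜 m α v.1, Vact 𝕜 m α v.2 - α • Vact 𝕜 m α v.1)

/-- The coefficient `C_k` of `α ^ k` in `pairAct`. -/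
def pairCoeff (m : ℕ) (v : (Fin m → 𝕜) × (Fin m → 𝕜)) :
    ℕ → (Fin m → 𝕜) × (Fin m → 𝕜)
  | 0 => (coeffV 𝕜 m 0 v.1, coeffV 𝕜 m 0 v.2)
  | k + 1 => (coeffV 𝕜 m (k + 1) v.1, coeffV 𝕜 m (k + 1) v.2 - coeffV 𝕜 m k v.1)

lemma pairAct_eq_sum (m : ℕ) (α : 𝕜) (v : (Fin m → 𝕜) × (Fin m → 𝕜)) :
    pairAct m α v = ∑ k ∈ Finset.range (m + 1), α ^ k • pairCoeff m v k := by
  have key : ∀ f : Fin m → 𝕜, Vact 𝕜 m α f =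
      ∑ k ∈ Finset.range m, α ^ (k + 1) • coeffV 𝕜 m (k + 1) f + coeffV 𝕜 m 0 f := by
    intro f
    rw [Vact_eq_sum, ← add_zero (∑ k ∈ Finset.range m, α ^ k • coeffV 𝕜 m k f),
      ← smul_zero (α ^ m), ← coeffV_self m f, ← Finset.sum_range_succ
        (fun k => α ^ k • coeffV 𝕜 m k f), Finset.sum_range_succ']
    simp
  rw [Finset.sum_range_succ']
  refine Prod.ext ?_ ?_
  · simp only [pairAct, pairCoeff, Prod.fst_add, Prod.fst_sum, Prod.smul_fst, pow_zero, one_smul]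
    exact key _
  · simp only [pairAct, pairCoeff, Prod.snd_add, Prod.snd_sum, Prod.smul_snd, pow_zero, one_smul,
      smul_sub, Finset.sum_sub_distrib]
    rw [key v.2, Vact_eq_sum m α v.1, Finset.smul_sum]
    simp only [smul_smul, ← pow_succ']
    abel

/-! ### The operators `C_p`, `C_{p-1}` and `C_1` -/

/-- The span of `z = (x_{p-1}, x_{p-2})` and `w = (0, x_{p-1})`, for `p = q + 2`, is cut out by
the evident equations on coordinates. -/
lemma mem_of_shape (q : ℕ) (U : Submodule 𝕜 ((Fin (q + 2) → 𝕜) × (Fin (q + 2) → 𝕜)))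
    (hw : (0, Pi.single ⟨q + 1, by omega⟩ 1) ∈ U)
    (hz : (Pi.single ⟨q + 1, by omega⟩ 1, Pi.single ⟨q, by omega⟩ 1) ∈ U)
    (f g : Fin (q + 2) → 𝕜) (hf : ∀ i : Fin (q + 2), (i : ℕ) < q + 1 → f i = 0)
    (hg : ∀ i : Fin (q + 2), (i : ℕ) < q → g i = 0)
    (hfg : g ⟨q, by omega⟩ = f ⟨q + 1, by omega⟩) : (f, g) ∈ U := by
  have : (f, g) = f ⟨q + 1, by omega⟩ •
        ((Pi.single ⟨q + 1, by omega⟩ 1, Pi.single ⟨q, by omega⟩ 1) :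
          (Fin (q + 2) → 𝕜) × (Fin (q + 2) → 𝕜)) +
      g ⟨q + 1, by omega⟩ • (0, Pi.single ⟨q + 1, by omega⟩ 1) := by
    refine Prod.ext ?_ ?_
    · ext i
      rcases Nat.lt_or_ge i (q + 1) with h | h
      · simp [Fin.ext_iff, hf i h, h.ne]
      · obtain rfl : i = ⟨q + 1, Nat.lt_succ_self _⟩ := Fin.ext (by have := i.2; simp; omega)
        simp
    · ext i
      rcases Nat.lt_or_ge i q with h | h
      · simp [Fin.ext_iff, hg i h, h.ne, (show (i : ℕ) ≠ q + 1 by omega)]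
      · rcases Nat.lt_or_ge i (q + 1) with h' | h'
        · obtain rfl : i = ⟨q, Nat.lt_add_of_pos_right two_pos⟩ := Fin.ext (by simp; omega)
          simp [Fin.ext_iff, hfg]
        · obtain rfl : i = ⟨q + 1, Nat.lt_succ_self _⟩ := Fin.ext (by have := i.2; simp; omega)
          simp [Fin.ext_iff]
  rw [this]
  exact U.add_mem (U.smul_mem _ hz) (U.smul_mem _ hw)

/-- A subspace stable under the `C_k` and containing some `(f, g)` with `f_0 ≠ 0` contains `w`
and `z`: these come from applying `C_p` and `C_{p-1}` to `(f, g)`. -/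
lemma wz_mem (q : ℕ) (U : Submodule 𝕜 ((Fin (q + 2) → 𝕜) × (Fin (q + 2) → 𝕜)))
    (hU : ∀ v ∈ U, ∀ k ≤ q + 2, pairCoeff (q + 2) v k ∈ U)
    (u : (Fin (q + 2) → 𝕜) × (Fin (q + 2) → 𝕜)) (hu : u ∈ U) (hu0 : u.1 0 ≠ 0) :
    ((0, Pi.single ⟨q + 1, by omega⟩ 1) : (Fin (q + 2) → 𝕜) × (Fin (q + 2) → 𝕜)) ∈ U ∧
    ((Pi.single ⟨q + 1, by omega⟩ 1, Pi.single ⟨q, by omega⟩ 1) :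
      (Fin (q + 2) → 𝕜) × (Fin (q + 2) → 𝕜)) ∈ U := by
  have top : ∀ f : Fin (q + 2) → 𝕜, coeffV 𝕜 (q + 2) (q + 1) f =
      ((-1) ^ (q + 1) * f 0) • Pi.single ⟨q + 1, by omega⟩ 1 := by
    intro f
    ext i
    rcases Nat.lt_or_ge i (q + 1) with h | h
    · simp [coeffV_apply, Nat.choose_eq_zero_of_lt h, Fin.ext_iff, h.ne]
    · obtain rfl : i = ⟨q + 1, Nat.lt_succ_self _⟩ := Fin.ext (by have := i.2; simp; omega)
      simp [coeffV_apply]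
  have hw : ((0, Pi.single ⟨q + 1, by omega⟩ 1) :
      (Fin (q + 2) → 𝕜) × (Fin (q + 2) → 𝕜)) ∈ U := by
    have h1 := hU u hu (q + 2) le_rfl
    have h2 : pairCoeff (q + 2) u (q + 2) = (-((-1) ^ (q + 1) * u.1 0)) •
        ((0, Pi.single ⟨q + 1, by omega⟩ 1) : (Fin (q + 2) → 𝕜) × (Fin (q + 2) → 𝕜)) := by
      simp only [pairCoeff]
      rw [coeffV_self, coeffV_self, top, zero_sub, Prod.smul_mk, smul_zero, neg_smul]
    rw [h2] at h1
    exact (U.smul_mem_iff (by simp [hu0])).1 h1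
  refine ⟨hw, ?_⟩
  have h1 := hU u hu (q + 1) (by omega)
  have h2 : pairCoeff (q + 2) u (q + 1) =
      ((-1) ^ (q + 1) * u.1 0) • ((Pi.single ⟨q + 1, by omega⟩ 1, Pi.single ⟨q, by omega⟩ 1) :
        (Fin (q + 2) → 𝕜) × (Fin (q + 2) → 𝕜)) +
      ((-1) ^ (q + 1) * u.2 0 - coeffV 𝕜 (q + 2) q u.1 ⟨q + 1, by omega⟩) •
        ((0, Pi.single ⟨q + 1, by omega⟩ 1) : (Fin (q + 2) → 𝕜) × (Fin (q + 2) → 𝕜)) := by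
    simp only [pairCoeff]
    rw [top, top]
    refine Prod.ext (by simp) ?_
    ext i
    rcases Nat.lt_or_ge i q with h | h
    · simp [Fin.ext_iff, coeffV_apply, Nat.choose_eq_zero_of_lt h, h.ne,
        (show (i : ℕ) ≠ q + 1 by omega)]
    · rcases Nat.lt_or_ge i (q + 1) with h' | h'
      · obtain rfl : i = ⟨q, Nat.lt_add_of_pos_right two_pos⟩ := Fin.ext (by simp; omega)
        simp [Fin.ext_iff, coeffV_apply, pow_succ]
      · obtain rfl : i = ⟨q + 1, Nat.lt_succ_self _⟩ := Fin.ext (by have := i.2; simp; omega)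
        simp [Fin.ext_iff]
  rw [h2] at h1
  have h3 := (U.add_mem_iff_left (U.smul_mem _ hw)).1 h1
  exact (U.smul_mem_iff (by simp [hu0])).1 h3

/-- `C_1` is nilpotent because it raises the degree of `x_i ⊗ x_j` by one. -/
lemma pairCoeff_one_nilpotent (m : ℕ) (v : (Fin m → 𝕜) × (Fin m → 𝕜)) :
    (fun v => pairCoeff m v 1)^[m + 1] v = 0 := by
  have key : ∀ k : ℕ, (∀ i : Fin m, (i : ℕ) < k →
      ((fun v => pairCoeff m v 1)^[k] v).1 i = 0) ∧
      ∀ i : Fin m, (i : ℕ) + 1 < k → ((fun v => pairCoeff m v 1)^[k] v).2 i = 0 := by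
    intro k
    induction k with
    | zero => simp
    | succ k ih =>
      obtain ⟨ih1, ih2⟩ := ih
      rw [Function.iterate_succ_apply']
      generalize (fun v => pairCoeff m v 1)^[k] v = w at ih1 ih2 ⊢
      constructor
      · intro i hi
        simp only [pairCoeff, coeffV_apply]
        rcases Nat.eq_zero_or_pos (i : ℕ) with h | h
        · simp [h]
        · rw [ih1 _ (by simp; omega), mul_zero]
      · intro i hi
        simp only [pairCoeff, coeffV_apply, Pi.sub_apply]
        rw [ih1 _ (by simp; omega)]
        rcases Nat.eq_zero_or_pos (i : ℕ) with h | h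
        · simp [h]
        · rw [ih2 _ (by simp; omega)]
          simp
  refine Prod.ext ?_ ?_
  · ext i
    exact (key (m + 1)).1 i (by omega)
  · ext i
    exact (key (m + 1)).2 i (by omega)

/-- The kernel of `C_1` lies in the span of `z` and `w`. This is where characteristic `p`
enters: `1, …, p - 1` are invertible, and `-(p - 1) = 1`. -/
lemma mem_of_pairCoeff_one_eq_zero (q : ℕ) [CharP 𝕜 (q + 2)]
    (U : Submodule 𝕜 ((Fin (q + 2) → 𝕜) × (Fin (q + 2) → 𝕜)))
    (hw : (0, Pi.single ⟨q + 1, by omega⟩ 1) ∈ U)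
    (hz : (Pi.single ⟨q + 1, by omega⟩ 1, Pi.single ⟨q, by omega⟩ 1) ∈ U)
    (v : (Fin (q + 2) → 𝕜) × (Fin (q + 2) → 𝕜)) (hv : pairCoeff (q + 2) v 1 = 0) : v ∈ U := by
  have hne : ∀ i : ℕ, i < q + 1 → ((i + 1 : ℕ) : 𝕜) ≠ 0 := by
    intro i hi h
    rw [CharP.cast_eq_zero_iff 𝕜 (q + 2)] at h
    exact absurd (Nat.le_of_dvd (by omega) h) (by omega)
  obtain ⟨f, g⟩ := v
  simp only [pairCoeff, Prod.mk_eq_zero] at hv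
  obtain ⟨h1, h2⟩ := hv
  have hf : ∀ i : Fin (q + 2), (i : ℕ) < q + 1 → f i = 0 := by
    intro i hi
    have := congrFun h1 ⟨i + 1, by omega⟩
    simp only [coeffV_apply, Pi.zero_apply, Nat.add_sub_cancel,
      Fin.eta] at this
    simpa [-Nat.cast_add, hne i hi] using this
  have hrel : ∀ (i : ℕ) (hi : i < q + 1),
      -((i + 1 : ℕ) : 𝕜) * g ⟨i, by omega⟩ = f ⟨i + 1, by omega⟩ := by
    intro i hi
    have := congrFun h2 ⟨i + 1, by omega⟩
    simp only [coeffV_apply, Pi.zero_apply, Nat.add_sub_cancel,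
      Pi.sub_apply, sub_eq_zero] at this
    simpa [-Nat.cast_add] using this
  refine mem_of_shape q U hw hz f g hf ?_ ?_
  · intro i hi
    have := hrel i (by omega)
    rw [hf _ (by simp; omega)] at this
    exact (mul_eq_zero.1 this).resolve_left (neg_ne_zero.2 (hne i (by omega)))
  · have h3 := hrel q (by omega)
    have h4 : -((q + 1 : ℕ) : 𝕜) = 1 := by
      have : ((q + 2 : ℕ) : 𝕜) = 0 := CharP.cast_eq_zero 𝕜 (q + 2)
      push_cast at this ⊢
      linear_combination -this
    rwa [h4, one_mul] at h3

/-- Of two disjoint subspaces stable under the `C_k`, if one contains some `(f, g)` with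
`f_0 ≠ 0` then it contains `ker C_1`, so the nilpotent operator `C_1` is injective on the other,
which is therefore zero. -/
lemma eq_bot_of_exists (q : ℕ) [CharP 𝕜 (q + 2)]
    (U U' : Submodule 𝕜 ((Fin (q + 2) → 𝕜) × (Fin (q + 2) → 𝕜)))
    (hU : ∀ v ∈ U, ∀ k ≤ q + 2, pairCoeff (q + 2) v k ∈ U)
    (hU' : ∀ v ∈ U', ∀ k ≤ q + 2, pairCoeff (q + 2) v k ∈ U')
    (hd : Disjoint U U') (u : (Fin (q + 2) → 𝕜) × (Fin (q + 2) → 𝕜)) (hu : u ∈ U)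
    (hu0 : u.1 0 ≠ 0) : U' = ⊥ := by
  obtain ⟨hw, hz⟩ := wz_mem q U hU u hu hu0
  have key : ∀ k : ℕ, ∀ v ∈ U', (fun v => pairCoeff (q + 2) v 1)^[k] v = 0 → v = 0 := by
    intro k
    induction k with
    | zero => intro v _ h; simpa using h
    | succ k ih =>
      intro v hv h
      rw [Function.iterate_succ_apply] at h
      have h1 := ih _ (hU' v hv 1 (by omega)) h
      exact Submodule.disjoint_def.1 hd v (mem_of_pairCoeff_one_eq_zero q U hw hz v h1) hv
  exact (Submodule.eq_bot_iff _).2 fun v hv => key _ v hv (pairCoeff_one_nilpotent _ v)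

/-! ### Transport to the tensor product -/

/-- The isomorphism `V × V ≃ V_2 ⊗ V`, `(f, g) ↦ x_0 ⊗ f + x_1 ⊗ g`. -/
noncomputable def pairEquiv (V : Type*) [AddCommGroup V] [Module 𝕜 V] :
    (V × V) ≃ₗ[𝕜] TensorProduct 𝕜 (Fin 2 → 𝕜) V :=
  LinearEquiv.ofLinearMap
    (LinearMap.coprod (TensorProduct.mk 𝕜 (Fin 2 → 𝕜) V (Pi.single 0 1))
      (TensorProduct.mk 𝕜 (Fin 2 → 𝕜) V (Pi.single 1 1)))
    (LinearMap.prod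
      (TensorProduct.lid 𝕜 V ∘ₗ TensorProduct.map (LinearMap.proj 0) LinearMap.id)
      (TensorProduct.lid 𝕜 V ∘ₗ TensorProduct.map (LinearMap.proj 1) LinearMap.id))
    (by
      refine TensorProduct.ext' fun a f => ?_
      have ha : a = a 0 • Pi.single 0 1 + a 1 • Pi.single 1 1 := by
        ext i; fin_cases i <;> simp
      conv_rhs => rw [ha]
      simp [TensorProduct.add_tmul, TensorProduct.smul_tmul])
    (by
      refine LinearMap.ext fun v => ?_
      simp)

lemma pairEquiv_apply (V : Type*) [AddCommGroup V] [Module 𝕜 V] (v : V × V) :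
    pairEquiv (𝕜 := 𝕜) V v = Pi.single 0 1 ⊗ₜ v.1 + Pi.single 1 1 ⊗ₜ v.2 := rfl

lemma map_pairEquiv (m : ℕ) (α : 𝕜) (v : (Fin m → 𝕜) × (Fin m → 𝕜)) :
    TensorProduct.map (Vact 𝕜 2 α) (Vact 𝕜 m α) (pairEquiv _ v) =
      pairEquiv _ (pairAct m α v) := by
  have h0 : Vact 𝕜 2 α (Pi.single 0 1) = Pi.single 0 1 - α • Pi.single 1 1 := by
    ext i; fin_cases i <;> simp [Vact, Bmat]
  have h1 : Vact 𝕜 2 α (Pi.single 1 1) = Pi.single 1 1 := by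
    ext i; fin_cases i <;> simp [Vact, Bmat]
  simp only [pairEquiv_apply, map_add, TensorProduct.map_tmul, h0, h1, pairAct,
    TensorProduct.sub_tmul, TensorProduct.tmul_sub, TensorProduct.smul_tmul]
  abel

/-- Invariance under `E` gives stability under the `C_k`. The hypothesis `n > 1` is used here, to
have more than `p` interpolation points. -/
lemma pairCoeff_mem (p n : ℕ) (hp : p.Prime) (E : AddSubgroup 𝕜) (hE : Nat.card E = p ^ n)
    (hn : 1 < n) (U : Submodule 𝕜 (TensorProduct 𝕜 (Fin 2 → 𝕜) (Fin p → 𝕜)))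
    (hU : ∀ α ∈ E, ∀ v ∈ U, TensorProduct.map (Vact 𝕜 2 α) (Vact 𝕜 p α) v ∈ U) :
    ∀ v ∈ U.comap (pairEquiv (𝕜 := 𝕜) (Fin p → 𝕜)).toLinearMap, ∀ k ≤ p,
      pairCoeff p v k ∈ U.comap (pairEquiv (𝕜 := 𝕜) (Fin p → 𝕜)).toLinearMap := by
  intro v hv k hk
  have hlt : p < Nat.card (E : Set 𝕜) := by
    have : p ^ 1 < p ^ n := Nat.pow_lt_pow_right hp.one_lt hn
    rw [pow_one, ← hE] at this
    exact this
  refine coeff_mem _ p (pairCoeff p v) (E : Set 𝕜) hlt (fun α hα => ?_) k hk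
  rw [← pairAct_eq_sum, Submodule.mem_comap]
  have := hU α hα _ hv
  rwa [LinearEquiv.coe_coe, map_pairEquiv] at this

variable (𝕜)

/-- **Theorem 1(b).** If `n > 1`, the `𝕜G`-module `V_2 ⊗ V_p` is indecomposable:
it is nonzero, and whenever it is the internal direct sum of two `G`-invariant
subspaces (i.e. `𝕜G`-submodules), one of them is zero. -/
theorem V2_tensor_Vp_indecomposable (p n : ℕ) (hp : p.Prime) [CharP 𝕜 p]
    (E : AddSubgroup 𝕜) (hE : Nat.card E = p ^ n) (hn : 1 < n) :
    (⊤ : Submodule 𝕜 (TensorProduct 𝕜 (Fin 2 → 𝕜) (Fin p → 𝕜))) ≠ ⊥ ∧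
    ∀ U U' : Submodule 𝕜 (TensorProduct 𝕜 (Fin 2 → 𝕜) (Fin p → 𝕜)),
      (∀ α ∈ E, ∀ v ∈ U, TensorProduct.map (Vact 𝕜 2 α) (Vact 𝕜 p α) v ∈ U) →
      (∀ α ∈ E, ∀ v ∈ U', TensorProduct.map (Vact 𝕜 2 α) (Vact 𝕜 p α) v ∈ U') →
      IsCompl U U' → U = ⊥ ∨ U' = ⊥ := by
  have hp2 := hp.two_le
  obtain ⟨q, rfl⟩ : ∃ q, p = q + 2 := ⟨p - 2, by omega⟩
  let e := pairEquiv (𝕜 := 𝕜) (Fin (q + 2) → 𝕜)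
  constructor
  · have : Nontrivial (TensorProduct 𝕜 (Fin 2 → 𝕜) (Fin (q + 2) → 𝕜)) :=
      e.symm.toEquiv.nontrivial
    exact top_ne_bot
  · intro U U' hU hU' hc
    have h1 := pairCoeff_mem (q + 2) n hp E hE hn U hU
    have h2 := pairCoeff_mem (q + 2) n hp E hE hn U' hU'
    have hc' : IsCompl (U.comap e.toLinearMap) (U'.comap e.toLinearMap) :=
      (Submodule.orderIsoMapComap e).symm.isCompl hc
    have hbot : ∀ S : Submodule 𝕜 (TensorProduct 𝕜 (Fin 2 → 𝕜) (Fin (q + 2) → 𝕜)),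
        S.comap e.toLinearMap = ⊥ → S = ⊥ := fun S hS =>
      (Submodule.orderIsoMapComap e).symm.injective (hS.trans (map_bot _).symm)
    -- The components in `U` and `U'` of `x_0 ⊗ x_0` cannot both have zero coefficient at
    -- `x_0 ⊗ x_0`.
    obtain ⟨u, hu, u', hu', huu⟩ := Submodule.mem_sup.1
      (hc'.sup_eq_top ▸ Submodule.mem_top :
        ((Pi.single 0 1, 0) : (Fin (q + 2) → 𝕜) × (Fin (q + 2) → 𝕜)) ∈
          U.comap e.toLinearMap ⊔ U'.comap e.toLinearMap)
    by_cases h0 : u.1 0 = 0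
    · have h3 : u'.1 0 ≠ 0 := by
        intro h4
        have := congrFun (congrArg Prod.fst huu) 0
        simp [h0, h4] at this
      exact Or.inl (hbot _ (eq_bot_of_exists q _ _ h2 h1 hc'.disjoint.symm u' hu' h3))
    · exact Or.inr (hbot _ (eq_bot_of_exists q _ _ h1 h2 hc'.disjoint u hu h0))

end ElemAbelianPaper
end

section
/- Let q = p^n be a prime power and let j, k be natural numbers with j ≤ k < q − 1. Then the binomial coefficient C(q−1−k+j, j) is congruent to (−1)^j · C(k, j) modulo p. -/
/-!
With `m = q - 1 - k` the claim reads `C(m + j, j) = (-1)^j C(k, j)` in `ZMod p` whenever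
`m + k = q - 1` and `j < q`. For fixed `q`, both sides satisfy the same Pascal recursion in
`(m, j)`, so they agree as soon as they do for `j = 0`, which is trivial, and for `m = 0`. The
latter is `C(q - 1, j) = (-1)^j` (`choose_pred_pow_cast`), which follows by induction on `j` from
`C(q - 1, j) + C(q - 1, j + 1) = C(q, j + 1) = 0` for `j + 1 < q`.
-/

lemma choose_pred_pow_cast {p n r : ℕ} (hp : p.Prime) (hr : r + 1 = p ^ n) (j : ℕ) (hj : j ≤ r) :
    (r.choose j : ZMod p) = (-1) ^ j := by
  induction j with
  | zero => simp
  | succ j ih =>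
    have h0 : ((p ^ n).choose (j + 1) : ZMod p) = 0 :=
      (ZMod.natCast_eq_zero_iff _ _).2 (hp.dvd_choose_pow (by omega) (by omega))
    rw [← hr, Nat.choose_succ_succ', Nat.cast_add, ih (by omega)] at h0
    rw [pow_succ]
    linear_combination h0

/-- The range `j < q`, rather than `j ≤ k`, is what makes the induction on `m` close up. -/
lemma choose_add_cast_of_add_eq {p n : ℕ} (hp : p.Prime) (m : ℕ) :
    ∀ k j : ℕ, m + k + 1 = p ^ n → j < p ^ n →
      ((m + j).choose j : ZMod p) = (-1) ^ j * (k.choose j : ZMod p) := by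
  induction m with
  | zero =>
    intro k j hk hj
    rw [choose_pred_pow_cast hp (by omega : k + 1 = p ^ n) j (by omega), ← mul_pow]
    simp
  | succ m ihm =>
    intro k j hk
    induction j with
    | zero => simp
    | succ j ihj =>
      intro hj
      have h1 := ihm (k + 1) (j + 1) (by omega) hj
      have h2 := ihj (by omega)
      rw [show m + 1 + j = m + (j + 1) by omega] at h2
      rw [show m + 1 + (j + 1) = m + (j + 1) + 1 by omega, Nat.choose_succ_succ', Nat.cast_add,
        h1, h2, Nat.choose_succ_succ', Nat.cast_add]
      ring

/-- **Lemma (binomial coefficients mod p).** Let `q = p^n` be a prime power (`n ≥ 1`)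
and let `j ≤ k < q − 1`.  Then `C(q−1−k+j, j) ≡ (−1)^j · C(k, j) (mod p)`. -/
theorem choose_qsub_mod_p (p n j k : ℕ) (hp : p.Prime) (hn : 1 ≤ n)
    (hjk : j ≤ k) (hk : k < p ^ n - 1) :
    ((p ^ n - 1 - k + j).choose j : ZMod p) = (-1) ^ j * (k.choose j : ZMod p) :=
  choose_add_cast_of_add_eq (n := n) hp (p ^ n - 1 - k) k j (by omega) (by omega)
end

section
/- Let 1 ≤ m < q. In V_2 ⊗ V_m, with basis y_i = x_0 ⊗ x_i and z_i = x_1 ⊗ x_i for 0 ≤ i ≤ m−1, set w_i = y_i + z_{i−1} for i = 0, …, m (interpreting y_m and z_{−1} as zero). Then the span of {w_0, …, w_m} is a 𝕜G-submodule of V_2 ⊗ V_m isomorphic to V_{m+1}; indeed α · w_i = Σ_{j=0}^{m−i} C(i+j, i)(−α)^j w_{i+j} for all α ∈ E. -/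
/-!
The formula for `α · w_i` is Pascal's rule. Writing `a_j = C(i+j, i) (-α)^j`, the `x_0`-part of
`α · w_i` is `∑ a_j x_0 ⊗ x_{i+j}`; the `x_1`-part collects `-α ∑ a_j x_1 ⊗ x_{i+j}`, coming
from `α · x_0 = x_0 - α x_1`, and `∑ C(i-1+j, i-1) (-α)^j x_1 ⊗ x_{i-1+j}`, and the coefficient
of `x_1 ⊗ x_{i+j-1}` in their sum is `(C(i+j-1, i) + C(i+j-1, i-1)) (-α)^j = a_j`
(`map_wvec`). Hence `x_i ↦ w_i` is an equivariant map from `V_{m+1}` onto the span of the `w_i`.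
It is injective because the coordinate of `∑ c_i w_i` at `x_0 ⊗ x_b` is `c_b`, and at
`x_1 ⊗ x_b` it is `c_{b+1}`; as `m ≥ 1`, every `c_i` occurs in this way.
-/

/-!
Setting (common to the paper "Tensor products and symmetric powers of modular
representations of elementary abelian p-groups"):

`p` is a prime, `𝕜` a field of characteristic `p`, `q = p^n`, and `G` an elementary
abelian `p`-group of order `q`, identified with an additive subgroup `E ⊆ 𝕜` of order
`q` via a faithful indecomposable 2-dimensional module `W`, on which `α ∈ E` acts by
`[[1, α], [0, 1]]`.  For `1 ≤ m ≤ q`, `V_m = S^{m-1}(W)^*` is modelled concretely as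
`𝕜^m` with basis `x_0, …, x_{m-1}`, on which `α ∈ E` acts by
`α · x_i = ∑_{j=0}^{m-1-i} C(i+j, i) (−α)^j x_{i+j}`.
-/

open scoped BigOperators TensorProduct
open CategoryTheory CategoryTheory.Limits MonoidalCategory MvPolynomial

namespace ElemAbelianPaper

variable (𝕜 : Type) [Field 𝕜]

/-- The basis vector `x_i` of `V_m` (zero if `i ≥ m`). -/
def xb (m i : ℕ) : Fin m → 𝕜 := fun j => if (j : ℕ) = i then 1 else 0

/-- `w_i = y_i + z_{i-1} = x_0 ⊗ x_i + x_1 ⊗ x_{i-1} ∈ V_2 ⊗ V_m`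
(with `y_m` and `z_{-1}` interpreted as zero). -/
noncomputable def wvec (m i : ℕ) : TensorProduct 𝕜 (Fin 2 → 𝕜) (Fin m → 𝕜) :=
  (xb 𝕜 2 0) ⊗ₜ[𝕜] (xb 𝕜 m i) +
    (if 1 ≤ i then (xb 𝕜 2 1) ⊗ₜ[𝕜] (xb 𝕜 m (i - 1)) else 0)

lemma xb_eq_zero {m i : ℕ} (h : m ≤ i) : xb 𝕜 m i = 0 := by
  funext k
  have := k.2
  simp only [xb, Pi.zero_apply, ite_eq_right_iff]
  omega

lemma xb_fin (m : ℕ) (i : Fin m) : xb 𝕜 m i = Pi.single i 1 := by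
  funext k
  simp [xb, Pi.single_apply, Fin.ext_iff]

/-- The action on `x_i`, with an arbitrary number `N ≥ m - i` of summands: those with
`i + j ≥ m` vanish. The freedom in `N` lets sums of different natural lengths be aligned. -/
lemma Vact_xb (m : ℕ) (α : 𝕜) (i N : ℕ) (h : m ≤ i + N) :
    Vact 𝕜 m α (xb 𝕜 m i) =
      ∑ j ∈ Finset.range N, (((i + j).choose i : 𝕜) * (-α) ^ j) • xb 𝕜 m (i + j) := by
  rcases le_or_gt m i with hi | hi
  · rw [xb_eq_zero 𝕜 hi, map_zero]
    refine (Finset.sum_eq_zero fun j _ => ?_).symm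
    rw [xb_eq_zero 𝕜 (by omega), smul_zero]
  · funext k
    have hk := k.2
    have hL : Vact 𝕜 m α (xb 𝕜 m i) k
        = ((k : ℕ).choose i : 𝕜) * (-α) ^ ((k : ℕ) - i) := by
      have := xb_fin 𝕜 m ⟨i, hi⟩
      simp only at this
      rw [this]
      simp [Vact, Bmat]
    rw [hL, Finset.sum_apply]
    rcases le_or_gt i k with hik | hik
    · rw [Finset.sum_eq_single ((k : ℕ) - i)]
      · simp [xb, Nat.add_sub_cancel' hik]
      · intro j _ hj
        have : ¬ (k : ℕ) = i + j := by omega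
        simp [xb, this]
      · intro hj
        exact absurd (Finset.mem_range.2 (by omega)) hj
    · rw [Nat.choose_eq_zero_of_lt hik, Finset.sum_eq_zero]
      · simp
      · intro j _
        have : ¬ (k : ℕ) = i + j := by omega
        simp [xb, this]

lemma Vact_two_zero_s6 (α : 𝕜) : Vact 𝕜 2 α (xb 𝕜 2 0) = xb 𝕜 2 0 + (-α) • xb 𝕜 2 1 := by
  rw [Vact_xb 𝕜 2 α 0 2 (by omega)]
  simp [Finset.sum_range_succ]

lemma Vact_two_one_s6 (α : 𝕜) : Vact 𝕜 2 α (xb 𝕜 2 1) = xb 𝕜 2 1 := by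
  rw [Vact_xb 𝕜 2 α 1 1 (by omega)]
  simp

/-- `α · w_i = ∑_j C(i+j, i) (-α)^j w_{i+j}`, by Pascal's rule on the `x_1`-part. -/
lemma map_wvec (m : ℕ) (α : 𝕜) (i : ℕ) (hi : i ≤ m) :
    TensorProduct.map (Vact 𝕜 2 α) (Vact 𝕜 m α) (wvec 𝕜 m i)
      = ∑ j ∈ Finset.range (m - i + 1),
          (((i + j).choose i : 𝕜) * (-α) ^ j) • wvec 𝕜 m (i + j) := by
  have hR : ∑ j ∈ Finset.range (m - i + 1),
        (((i + j).choose i : 𝕜) * (-α) ^ j) • wvec 𝕜 m (i + j)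
      = xb 𝕜 2 0 ⊗ₜ[𝕜] Vact 𝕜 m α (xb 𝕜 m i)
        + ∑ j ∈ Finset.range (m - i + 1), (((i + j).choose i : 𝕜) * (-α) ^ j) •
          (if 1 ≤ i + j then xb 𝕜 2 1 ⊗ₜ[𝕜] xb 𝕜 m (i + j - 1) else 0) := by
    rw [Vact_xb 𝕜 m α i (m - i + 1) (by omega), TensorProduct.tmul_sum,
      ← Finset.sum_add_distrib]
    refine Finset.sum_congr rfl fun j _ => ?_
    rw [wvec, smul_add, TensorProduct.tmul_smul]
  -- The summands with left factor `x_0` cancel; those with left factor `x_1` remain.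
  rw [hR, wvec, map_add, TensorProduct.map_tmul, Vact_two_zero_s6, TensorProduct.add_tmul, add_assoc]
  congr 1
  -- One summand fewer than in `hR`, so that the factor `-α` shifts this sum onto the terms
  -- `j ≥ 1` of the right-hand side.
  rw [Vact_xb 𝕜 m α i (m - i) (by omega)]
  rcases i with _ | i
  · rw [Finset.sum_range_succ']
    simp [TensorProduct.tmul_sum, TensorProduct.smul_tmul', smul_smul, pow_succ, mul_comm]
  · simp only [Nat.le_add_left, if_true, Nat.add_sub_cancel, TensorProduct.map_tmul,
      Vact_two_one_s6]
    rw [Vact_xb 𝕜 m α i (m - (i + 1) + 1) (by omega), Finset.sum_range_succ',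
      Finset.sum_range_succ', TensorProduct.tmul_add, ← add_assoc]
    congr 1
    · rw [TensorProduct.tmul_sum, TensorProduct.tmul_sum, ← Finset.sum_add_distrib]
      refine Finset.sum_congr rfl fun j _ => ?_
      have h1 : 1 ≤ i + 1 + (j + 1) := by omega
      have h2 : i + 1 + (j + 1) - 1 = i + 1 + j := by omega
      have h3 : i + (j + 1) = i + 1 + j := by omega
      rw [if_pos h1, h2, h3, show i + 1 + (j + 1) = (i + 1 + j) + 1 by omega,
        Nat.choose_succ_succ, TensorProduct.tmul_smul, TensorProduct.tmul_smul,
        ← TensorProduct.smul_tmul', smul_smul, ← add_smul]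
      congr 1
      push_cast
      ring
    · simp

/-- The coordinate functional of `V_2 ⊗ V_m` at the basis vector `x_a ⊗ x_b`. -/
noncomputable def coord (m : ℕ) (a : Fin 2) (b : Fin m) :
    TensorProduct 𝕜 (Fin 2 → 𝕜) (Fin m → 𝕜) →ₗ[𝕜] 𝕜 :=
  LinearMap.mul' 𝕜 𝕜 ∘ₗ TensorProduct.map (LinearMap.proj a) (LinearMap.proj b)

lemma coord_zero_wvec (m : ℕ) (b : Fin m) (i : ℕ) :
    coord 𝕜 m 0 b (wvec 𝕜 m i) = if (b : ℕ) = i then 1 else 0 := by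
  by_cases h : 1 ≤ i <;> simp [coord, wvec, xb, h]

lemma coord_one_wvec (m : ℕ) (b : Fin m) (i : ℕ) :
    coord 𝕜 m 1 b (wvec 𝕜 m i) = if (b : ℕ) + 1 = i then 1 else 0 := by
  rcases i with _ | i <;> simp [coord, wvec, xb]

/-- The linear map `V_{m+1} → V_2 ⊗ V_m` with `x_i ↦ w_i`. -/
noncomputable def wmap (m : ℕ) :
    (Fin (m + 1) → 𝕜) →ₗ[𝕜] TensorProduct 𝕜 (Fin 2 → 𝕜) (Fin m → 𝕜) :=
  Fintype.linearCombination 𝕜 fun i : Fin (m + 1) => wvec 𝕜 m i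

lemma wmap_xb (m i : ℕ) (hi : i ≤ m) : wmap 𝕜 m (xb 𝕜 (m + 1) i) = wvec 𝕜 m i := by
  have := xb_fin 𝕜 (m + 1) ⟨i, by omega⟩
  simp only at this
  rw [this, wmap, Fintype.linearCombination_apply_single, one_smul]

lemma wmap_injective (m : ℕ) (hm : 1 ≤ m) : Function.Injective (wmap 𝕜 m) := by
  rw [injective_iff_map_eq_zero]
  intro c hc
  rw [wmap, Fintype.linearCombination_apply] at hc
  funext i
  -- `c_0` is read off at `x_0 ⊗ x_0`, which needs `m ≥ 1`, and `c_i` at `x_1 ⊗ x_{i-1}`.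
  rcases Nat.eq_zero_or_pos (i : ℕ) with hi | hi
  · have h := congrArg (coord 𝕜 m 0 ⟨i, by omega⟩) hc
    simpa [coord_zero_wvec, ← Fin.ext_iff] using h
  · have h := congrArg (coord 𝕜 m 1 ⟨(i : ℕ) - 1, by omega⟩) hc
    simpa [coord_one_wvec, Nat.sub_add_cancel hi, ← Fin.ext_iff] using h

lemma range_wmap (m : ℕ) :
    LinearMap.range (wmap 𝕜 m) = Submodule.span 𝕜 (wvec 𝕜 m '' Set.Iic m) := by
  rw [wmap, Fintype.range_linearCombination]
  congr 1
  ext v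
  constructor
  · rintro ⟨i, rfl⟩
    exact ⟨i, Nat.lt_succ_iff.1 i.2, rfl⟩
  · rintro ⟨i, hi, rfl⟩
    exact ⟨⟨i, Nat.lt_succ_iff.2 hi⟩, rfl⟩

lemma wmap_Vact (m : ℕ) (α : 𝕜) (c : Fin (m + 1) → 𝕜) :
    wmap 𝕜 m (Vact 𝕜 (m + 1) α c)
      = TensorProduct.map (Vact 𝕜 2 α) (Vact 𝕜 m α) (wmap 𝕜 m c) := by
  suffices h : wmap 𝕜 m ∘ₗ Vact 𝕜 (m + 1) α
      = TensorProduct.map (Vact 𝕜 2 α) (Vact 𝕜 m α) ∘ₗ wmap 𝕜 m from LinearMap.congr_fun h c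
  refine (Pi.basisFun 𝕜 (Fin (m + 1))).ext fun i => ?_
  have hi : (i : ℕ) ≤ m := Nat.lt_succ_iff.1 i.2
  rw [Pi.basisFun_apply, ← xb_fin, LinearMap.comp_apply, LinearMap.comp_apply,
    wmap_xb 𝕜 m i hi, map_wvec 𝕜 m α i hi,
    Vact_xb 𝕜 (m + 1) α i (m - i + 1) (by omega), map_sum]
  refine Finset.sum_congr rfl fun j hj => ?_
  rw [Finset.mem_range] at hj
  rw [map_smul, wmap_xb 𝕜 m _ (by omega)]

/-- **Lemma.** For `1 ≤ m < q`, the elements `w_0, …, w_m` of `V_2 ⊗ V_m` satisfy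
`α · w_i = ∑_{j=0}^{m−i} C(i+j, i) (−α)^j w_{i+j}`, their span is a `𝕜G`-submodule of
`V_2 ⊗ V_m`, and this submodule is isomorphic to `V_{m+1}`. -/
theorem w_span_iso_Vm_succ (p n : ℕ) (hp : p.Prime) [CharP 𝕜 p]
    (E : AddSubgroup 𝕜) (hE : Nat.card E = p ^ n)
    (m : ℕ) (hm1 : 1 ≤ m) (hm : m < p ^ n) :
    (∀ α ∈ E, ∀ i ≤ m,
        TensorProduct.map (Vact 𝕜 2 α) (Vact 𝕜 m α) (wvec 𝕜 m i)
          = ∑ j ∈ Finset.range (m - i + 1),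
              (((i + j).choose i : 𝕜) * (-α) ^ j) • wvec 𝕜 m (i + j)) ∧
    (∀ α ∈ E, ∀ v ∈ Submodule.span 𝕜 (wvec 𝕜 m '' Set.Iic m),
        TensorProduct.map (Vact 𝕜 2 α) (Vact 𝕜 m α) v
          ∈ Submodule.span 𝕜 (wvec 𝕜 m '' Set.Iic m)) ∧
    ∃ g : (Fin (m + 1) → 𝕜) →ₗ[𝕜] TensorProduct 𝕜 (Fin 2 → 𝕜) (Fin m → 𝕜),
      Function.Injective g ∧
      LinearMap.range g = Submodule.span 𝕜 (wvec 𝕜 m '' Set.Iic m) ∧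
      ∀ α ∈ E, ∀ c, g (Vact 𝕜 (m + 1) α c)
        = TensorProduct.map (Vact 𝕜 2 α) (Vact 𝕜 m α) (g c) := by
  refine ⟨fun α _ i hi => map_wvec 𝕜 m α i hi, fun α _ v hv => ?_,
    wmap 𝕜 m, wmap_injective 𝕜 m hm1, range_wmap 𝕜 m, fun α _ c => wmap_Vact 𝕜 m α c⟩
  rw [← range_wmap] at hv ⊢
  obtain ⟨c, rfl⟩ := hv
  exact ⟨_, wmap_Vact 𝕜 m α c⟩

end ElemAbelianPaper
end

section
/- If i < p or i = p^k ≤ q for some natural number k, then V_i is self-dual: V_i ≅ V_i^* as 𝕜G-modules. -/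
/-!
For every `m`, with `N = m - 1`, the bilinear form on `V_m` given by
`⟨x_a, x_b⟩ = (-1)^a C(N, a)` if `a + b = N`, and `0` otherwise, is invariant under every `α ∈ 𝕜`.
Comparing coefficients, the invariance is the trinomial symmetry
`C(N, b) C(N - b, a) = C(N, a) C(N - a, b)` (`selfDualGram_invariant`).

The form is nondegenerate exactly when no `C(N, a)` with `a ≤ N` vanishes in `𝕜`. This holds when
`m < p`, because then `p ∤ N!`, and when `m = p^k`, because `p ∣ C(p^k, a + 1)` for `a + 1 < p^k`
and Pascal's rule make `C(p^k - 1, a)` and `C(p^k - 1, a + 1)` opposite modulo `p`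
(`prime_not_dvd_choose`).
-/

/-!
Setting (common to the paper "Tensor products and symmetric powers of modular
representations of elementary abelian p-groups"):

`p` is a prime, `𝕜` a field of characteristic `p`, `q = p^n`, and `G` an elementary
abelian `p`-group of order `q`, identified with an additive subgroup `E ⊆ 𝕜` of order
`q` via a faithful indecomposable 2-dimensional module `W`, on which `α ∈ E` acts by
`[[1, α], [0, 1]]`.  For `1 ≤ m ≤ q`, `V_m = S^{m-1}(W)^*` is modelled concretely as
`𝕜^m` with basis `x_0, …, x_{m-1}`, on which `α ∈ E` acts by
`α · x_i = ∑_{j=0}^{m-1-i} C(i+j, i) (−α)^j x_{i+j}`.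
-/

open scoped BigOperators TensorProduct
open CategoryTheory CategoryTheory.Limits MonoidalCategory MvPolynomial

namespace ElemAbelianPaper

variable (𝕜 : Type) [Field 𝕜]

/-- The Gram matrix, in the basis `x_0, …, x_{m-1}`, of the invariant form on `V_m`; `Fin.rev a` is
the index `m - 1 - a`. -/
noncomputable def selfDualGram (m : ℕ) : Matrix (Fin m) (Fin m) 𝕜 :=
  Matrix.of fun a b => if b = Fin.rev a then (-1) ^ (a : ℕ) * ((m - 1).choose (a : ℕ) : 𝕜) else 0

theorem choose_mul_choose_sub_comm (N a b : ℕ) :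
    N.choose b * (N - b).choose a = N.choose a * (N - a).choose b := by
  have h1 := Nat.choose_mul (n := N) (k := a + b) (s := a) (by omega)
  have h2 := Nat.choose_mul (n := N) (k := a + b) (s := b) (by omega)
  have h3 : (a + b).choose a = (a + b).choose b := Nat.choose_symm_add
  rw [Nat.add_sub_cancel_left] at h1
  rw [Nat.add_sub_cancel] at h2
  rw [← h1, ← h2, h3]

/-- Invariance of the form: `⟨α · v, w⟩ = ⟨v, (-α) · w⟩`, as an identity of matrices. -/
theorem selfDualGram_invariant (m : ℕ) (α : 𝕜) :
    (Bmat 𝕜 m α).transpose * selfDualGram 𝕜 m = selfDualGram 𝕜 m * Bmat 𝕜 m (-α) := by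
  ext a b
  have hrev : ∀ k : Fin m, b = Fin.rev k ↔ k = Fin.rev b := fun k =>
    ⟨fun h => by rw [h, Fin.rev_rev], fun h => by rw [h, Fin.rev_rev]⟩
  simp only [Matrix.mul_apply, Matrix.transpose_apply, selfDualGram, Bmat, Matrix.of_apply, hrev,
    mul_ite, ite_mul, mul_zero, zero_mul, Finset.sum_ite_eq', Finset.mem_univ, if_true, neg_neg,
    Fin.val_rev]
  have ha := a.isLt
  have hb := b.isLt
  by_cases h : (a : ℕ) + b ≤ m - 1
  · obtain ⟨d, hd⟩ := Nat.exists_eq_add_of_le h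
    have e1 : m - ((b : ℕ) + 1) = m - 1 - b := by omega
    have e2 : m - ((a : ℕ) + 1) = m - 1 - a := by omega
    have e3 : m - 1 - (b : ℕ) - a = d := by omega
    have e4 : m - 1 - (a : ℕ) - b = d := by omega
    have e5 : m - 1 - (b : ℕ) = a + d := by omega
    have key := congrArg (Nat.cast (R := 𝕜)) (choose_mul_choose_sub_comm (m - 1) a b)
    rw [← Nat.choose_symm (n := m - 1) (k := (b : ℕ)) (by omega)] at key
    push_cast at key
    have hs : (-1 : 𝕜) ^ d * (-1) ^ d = 1 := by rw [← mul_pow]; simp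
    rw [e1, e2, e3, e4, neg_pow α d]
    have hp : (-1 : 𝕜) ^ (m - 1 - (b : ℕ)) = (-1) ^ (a : ℕ) * (-1) ^ d := by rw [e5, pow_add]
    rw [hp]
    linear_combination (-1 : 𝕜) ^ (a : ℕ) * α ^ d * key +
      (-1 : 𝕜) ^ (a : ℕ) * α ^ d * ((m - 1 - (b : ℕ)).choose a : 𝕜) *
        ((m - 1).choose (m - 1 - (b : ℕ)) : 𝕜) * hs
  · rw [Nat.choose_eq_zero_of_lt (n := m - ((b : ℕ) + 1)) (by omega),
      Nat.choose_eq_zero_of_lt (n := m - ((a : ℕ) + 1)) (by omega)]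
    simp

theorem prime_not_dvd_choose {p i : ℕ} (hp : p.Prime) (h : i < p ∨ ∃ k : ℕ, i = p ^ k) :
    ∀ a < i, ¬ p ∣ (i - 1).choose a := by
  intro a ha hdvd
  rcases h with h | ⟨k, rfl⟩
  · have h1 : p ∣ (i - 1).factorial := by
      rw [← Nat.choose_mul_factorial_mul_factorial (n := i - 1) (k := a) (by omega)]
      exact (hdvd.mul_right _).mul_right _
    have := (hp.dvd_factorial).1 h1
    omega
  · induction a with
    | zero =>
      rw [Nat.choose_zero_right] at hdvd
      exact hp.one_lt.ne' (Nat.dvd_one.1 hdvd)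
    | succ a ih =>
      refine ih (by omega) ?_
      have h1 : p ∣ (p ^ k).choose (a + 1) := hp.dvd_choose_pow (by omega) (by omega)
      obtain ⟨N, hN⟩ : ∃ N, p ^ k = N + 1 := ⟨p ^ k - 1, by omega⟩
      rw [hN] at h1 hdvd ⊢
      rw [Nat.add_sub_cancel] at hdvd ⊢
      rw [Nat.choose_succ_succ] at h1
      exact (Nat.dvd_add_left hdvd).1 h1

/-- **Proposition (self-duality).** If `i < p`, or `i = p^k ≤ q` for some `k`, then
`V_i ≅ V_i^*` as `𝕜G`-modules (the dual module carries the contragredient action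
`α · φ = φ ∘ (−α ·)`). -/
theorem Vi_self_dual (p n : ℕ) (hp : p.Prime) [CharP 𝕜 p]
    (E : AddSubgroup 𝕜) (hE : Nat.card E = p ^ n)
    (i : ℕ) (h : i < p ∨ ∃ k : ℕ, i = p ^ k ∧ p ^ k ≤ p ^ n) :
    ∃ e : (Fin i → 𝕜) ≃ₗ[𝕜] Module.Dual 𝕜 (Fin i → 𝕜),
      ∀ α ∈ E, ∀ v, e (Vact 𝕜 i α v) = (e v) ∘ₗ Vact 𝕜 i (-α) := by
  have hne : ∀ a : Fin i, (-1 : 𝕜) ^ (a : ℕ) * ((i - 1).choose (a : ℕ) : 𝕜) ≠ 0 := fun a =>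
    mul_ne_zero (pow_ne_zero _ (neg_ne_zero.2 one_ne_zero)) fun h0 =>
      prime_not_dvd_choose hp (h.imp_right fun ⟨k, hk, _⟩ => ⟨k, hk⟩) a a.isLt
        ((CharP.cast_eq_zero_iff 𝕜 p _).1 h0)
  let f : (Fin i → 𝕜) →ₗ[𝕜] Module.Dual 𝕜 (Fin i → 𝕜) :=
    Matrix.toLinearMap₂' 𝕜 (selfDualGram 𝕜 i)
  have hf : ∀ v w, f v w = v ⬝ᵥ (selfDualGram 𝕜 i).mulVec w := fun v w =>
    Matrix.toLinearMap₂'_apply' _ v w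
  have hinj : Function.Injective f := by
    rw [injective_iff_map_eq_zero]
    intro v hv
    ext a
    -- Pairing `v` with `x_{i-1-a}` reads off its `a`-th coordinate, up to a nonzero scalar.
    have h1 : f v (Pi.single (Fin.rev a) 1) = 0 := by rw [hv]; rfl
    rw [hf] at h1
    simp only [Matrix.mulVec_single_one, dotProduct, Matrix.col_apply, selfDualGram,
      Matrix.of_apply, Fin.rev_inj, mul_ite, mul_zero, Finset.sum_ite_eq, Finset.mem_univ,
      if_true] at h1
    exact (mul_eq_zero.1 h1).resolve_right (hne a)
  refine ⟨LinearMap.linearEquivOfInjective f hinj Subspace.dual_finrank_eq.symm, ?_⟩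
  intro α _ v
  refine LinearMap.ext fun w => ?_
  rw [LinearMap.linearEquivOfInjective_apply, LinearMap.linearEquivOfInjective_apply,
    LinearMap.comp_apply, hf, hf]
  simp only [Vact, Matrix.mulVecLin_apply]
  rw [Matrix.mulVec_mulVec, ← selfDualGram_invariant, ← Matrix.mulVec_mulVec,
    Matrix.dotProduct_mulVec v, Matrix.vecMul_transpose]

end ElemAbelianPaper
end

section
/- Suppose p > 2 and p + 1 < q. With x_0, …, x_p the standard basis of V_{p+1}, the elements y_i = (i+1)·x_{i+1} for i = 0, …, p−2 span a 𝕜G-submodule of V_{p+1} isomorphic to V_{p−1}; indeed α · y_i = Σ_{k=0}^{p−2−i} C(i+k, k)(−α)^k y_{i+k} for all α ∈ E. -/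
/-!
The identity `(i+1) C(j, i+1) = j C(j-1, i)` shows that `α` acts on `y_0, …, y_{p-2}` by the same
binomial coefficients as on the basis of `V_{p-1}`, provided that the coefficient of `x_p` in
`α · y_i` vanishes; it does, being divisible by `C(p, i+1) ≡ 0` mod `p` (`Vact_yvec`). Hence the
linear map `x_i ↦ y_i` (`yMap`) is equivariant, and its image, the span of the `y_i`, is a
submodule. The map is injective because `1, …, p-1` are invertible in `𝕜` (`yMap_injective`).
-/

/-!
Setting (common to the paper "Tensor products and symmetric powers of modular
representations of elementary abelian p-groups"):

`p` is a prime, `𝕜` a field of characteristic `p`, `q = p^n`, and `G` an elementary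
abelian `p`-group of order `q`, identified with an additive subgroup `E ⊆ 𝕜` of order
`q` via a faithful indecomposable 2-dimensional module `W`, on which `α ∈ E` acts by
`[[1, α], [0, 1]]`.  For `1 ≤ m ≤ q`, `V_m = S^{m-1}(W)^*` is modelled concretely as
`𝕜^m` with basis `x_0, …, x_{m-1}`, on which `α ∈ E` acts by
`α · x_i = ∑_{j=0}^{m-1-i} C(i+j, i) (−α)^j x_{i+j}`.
-/

open scoped BigOperators TensorProduct
open CategoryTheory CategoryTheory.Limits MonoidalCategory MvPolynomial

namespace ElemAbelianPaper

variable (𝕜 : Type) [Field 𝕜]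

/-- `y_i = (i+1) x_{i+1} ∈ V_{p+1}`. -/
noncomputable def yvec (p i : ℕ) : Fin (p + 1) → 𝕜 :=
  ((i : 𝕜) + 1) • xb 𝕜 (p + 1) (i + 1)

/-- The `j`-th coordinate of `∑ a_k y_k`: as `y_k` is supported at `k + 1` with value `k + 1`, it is
`j a_{j-1}` when `1 ≤ j < p`, and `0` otherwise. -/
lemma sum_yvec_apply (p : ℕ) (a : ℕ → 𝕜) (j : Fin (p + 1)) :
    (∑ k ∈ Finset.range (p - 1), a k • yvec 𝕜 p k) j
      = if 1 ≤ (j : ℕ) ∧ (j : ℕ) < p then ((j : ℕ) : 𝕜) * a (j - 1) else 0 := by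
  have h : ∀ k, (a k • yvec 𝕜 p k) j
      = if (j : ℕ) - 1 = k then (if 1 ≤ (j : ℕ) then ((j : ℕ) : 𝕜) * a (j - 1) else 0) else 0 := by
    intro k
    by_cases hk : (j : ℕ) = k + 1
    · simp [yvec, xb, hk, mul_comm]
    · by_cases hj : 1 ≤ (j : ℕ)
      · simp [yvec, xb, hk, show (j : ℕ) - 1 ≠ k by omega]
      · simp [yvec, xb, hk, hj]
  rw [Finset.sum_apply, Finset.sum_congr rfl fun k _ => h k, Finset.sum_ite_eq]
  simp only [Finset.mem_range]
  grind

/-- `α · y_i` is given by column `i` of the matrix of `α` on `V_{p-1}`. Away from the top coordinate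
this is `C(j, i+1) (i+1) = j C(j-1, i)`; at `j = p` it is the vanishing of `C(p, i+1)` mod `p`. -/
lemma Vact_yvec (p : ℕ) (hp : p.Prime) [CharP 𝕜 p] (α : 𝕜) (i : ℕ) (hi : i < p - 1) :
    Vact 𝕜 (p + 1) α (yvec 𝕜 p i)
      = ∑ k ∈ Finset.range (p - 1), ((k.choose i : 𝕜) * (-α) ^ (k - i)) • yvec 𝕜 p k := by
  ext j
  rw [sum_yvec_apply 𝕜 p (fun k => (k.choose i : 𝕜) * (-α) ^ (k - i))]
  have hL : Vact 𝕜 (p + 1) α (yvec 𝕜 p i) j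
      = ((i : 𝕜) + 1) * (((j : ℕ).choose (i + 1) : 𝕜) * (-α) ^ ((j : ℕ) - (i + 1))) := by
    have hx : xb 𝕜 (p + 1) (i + 1) = Pi.single (⟨i + 1, by omega⟩ : Fin (p + 1)) 1 := by
      ext l
      simp [xb, Pi.single_apply, Fin.ext_iff]
    rw [yvec, map_smul, hx]
    simp [Vact, Bmat]
  rw [hL]
  obtain ⟨j, hj⟩ := j
  rcases j with _ | j
  · simp
  · dsimp only
    split_ifs with h
    · have e := congrArg (Nat.cast : ℕ → 𝕜) (Nat.add_one_mul_choose_eq j i)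
      push_cast at e
      rw [Nat.add_sub_cancel, Nat.add_sub_add_right]
      push_cast
      linear_combination (-(-α) ^ (j - i)) * e
    · have hjp : j + 1 = p := by omega
      have : ((p.choose (i + 1) : ℕ) : 𝕜) = 0 :=
        (CharP.cast_eq_zero_iff 𝕜 p _).2 (hp.dvd_choose_self (by omega) (by omega))
      rw [hjp, this]
      simp

/-- The map `V_{p-1} → V_{p+1}` sending `x_i` to `y_i`. -/
noncomputable def yMap (p : ℕ) : (Fin (p - 1) → 𝕜) →ₗ[𝕜] (Fin (p + 1) → 𝕜) :=
  Fintype.linearCombination 𝕜 fun i : Fin (p - 1) => yvec 𝕜 p i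

lemma range_yMap (p : ℕ) :
    LinearMap.range (yMap 𝕜 p) = Submodule.span 𝕜 (yvec 𝕜 p '' Set.Iio (p - 1)) := by
  rw [yMap, Fintype.range_linearCombination]
  congr 1
  ext v
  constructor
  · rintro ⟨i, rfl⟩
    exact ⟨i, i.2, rfl⟩
  · rintro ⟨i, hi, rfl⟩
    exact ⟨⟨i, hi⟩, rfl⟩

/-- The `y_i` are linearly independent because `i + 1` is invertible mod `p` for `i < p - 1`. -/
lemma yMap_injective (p : ℕ) [CharP 𝕜 p] : Function.Injective (yMap 𝕜 p) := by
  rw [← LinearMap.ker_eq_bot, LinearMap.ker_eq_bot']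
  intro c hc
  ext i
  let a : ℕ → 𝕜 := fun k => if h : k < p - 1 then c ⟨k, h⟩ else 0
  have hs : yMap 𝕜 p c = ∑ k ∈ Finset.range (p - 1), a k • yvec 𝕜 p k := by
    rw [← Fin.sum_univ_eq_sum_range (fun k => a k • yvec 𝕜 p k), yMap,
      Fintype.linearCombination_apply]
    simp [a]
  have hi := i.2
  have h := sum_yvec_apply 𝕜 p a ⟨i + 1, by omega⟩
  rw [← hs, hc, if_pos ⟨by simp, by dsimp only; omega⟩] at h
  have hne : (((i : ℕ) + 1 : ℕ) : 𝕜) ≠ 0 := fun h0 =>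
    absurd (Nat.le_of_dvd (by omega) ((CharP.cast_eq_zero_iff 𝕜 p _).1 h0)) (by omega)
  have h' := (mul_eq_zero.1 h.symm).resolve_left hne
  simpa [a] using h'

lemma yMap_equivariant (p : ℕ) (hp : p.Prime) [CharP 𝕜 p] (α : 𝕜) (c : Fin (p - 1) → 𝕜) :
    yMap 𝕜 p (Vact 𝕜 (p - 1) α c) = Vact 𝕜 (p + 1) α (yMap 𝕜 p c) := by
  have h : yMap 𝕜 p ∘ₗ Vact 𝕜 (p - 1) α = Vact 𝕜 (p + 1) α ∘ₗ yMap 𝕜 p := by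
    refine LinearMap.pi_ext' fun i => LinearMap.ext_ring ?_
    have h1 : yMap 𝕜 p (Pi.single i 1) = yvec 𝕜 p i := by
      simp [yMap]
    simp only [LinearMap.comp_apply, LinearMap.single_apply]
    rw [h1, Vact_yvec 𝕜 p hp α i i.2,
      ← Fin.sum_univ_eq_sum_range
        (fun k => ((k.choose i : 𝕜) * (-α) ^ (k - (i : ℕ))) • yvec 𝕜 p k),
      yMap, Fintype.linearCombination_apply]
    simp [Vact, Bmat]
  exact LinearMap.congr_fun h c

/-- **Claim (inside Lemma 12).** Suppose `p > 2` (and `p + 1 < q` so that `V_{p+1}` is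
among the modules considered).  The elements `y_i = (i+1) x_{i+1}`, `i = 0, …, p−2`,
satisfy `α · y_i = ∑_{k=0}^{p−2−i} C(i+k, k) (−α)^k y_{i+k}`, their span is a
`𝕜G`-submodule of `V_{p+1}`, and this submodule is isomorphic to `V_{p−1}`. -/
theorem y_span_iso_Vpm1 (p n : ℕ) (hp : p.Prime) [CharP 𝕜 p]
    (E : AddSubgroup 𝕜) (hE : Nat.card E = p ^ n) (hp2 : 2 < p) (hpq : p + 1 < p ^ n) :
    (∀ α ∈ E, ∀ i, i ≤ p - 2 →
        Vact 𝕜 (p + 1) α (yvec 𝕜 p i)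
          = ∑ k ∈ Finset.range (p - 1 - i),
              (((i + k).choose k : 𝕜) * (-α) ^ k) • yvec 𝕜 p (i + k)) ∧
    (∀ α ∈ E, ∀ v ∈ Submodule.span 𝕜 (yvec 𝕜 p '' Set.Iio (p - 1)),
        Vact 𝕜 (p + 1) α v ∈ Submodule.span 𝕜 (yvec 𝕜 p '' Set.Iio (p - 1))) ∧
    ∃ g : (Fin (p - 1) → 𝕜) →ₗ[𝕜] (Fin (p + 1) → 𝕜),
      Function.Injective g ∧
      LinearMap.range g = Submodule.span 𝕜 (yvec 𝕜 p '' Set.Iio (p - 1)) ∧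
      ∀ α ∈ E, ∀ c, g (Vact 𝕜 (p - 1) α c) = Vact 𝕜 (p + 1) α (g c) := by
  refine ⟨?_, ?_, yMap 𝕜 p, yMap_injective 𝕜 p, range_yMap 𝕜 p,
    fun α _ c => yMap_equivariant 𝕜 p hp α c⟩
  · intro α _ i hi
    -- The terms with `k < i` in `Vact_yvec` vanish, so the sum may be started at `k = i`.
    rw [Vact_yvec 𝕜 p hp α i (by omega)]
    conv_lhs => rw [show p - 1 = i + (p - 1 - i) by omega, Finset.sum_range_add]
    rw [Finset.sum_eq_zero, zero_add]
    · refine Finset.sum_congr rfl fun k _ => ?_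
      rw [Nat.add_sub_cancel_left, Nat.choose_symm_add]
    · intro k hk
      rw [Nat.choose_eq_zero_of_lt (Finset.mem_range.1 hk)]
      simp
  · intro α _ v hv
    rw [← range_yMap] at hv ⊢
    obtain ⟨c, rfl⟩ := hv
    exact ⟨Vact 𝕜 (p - 1) α c, yMap_equivariant 𝕜 p hp α c⟩

end ElemAbelianPaper
end
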